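/- arXiv:math/0010190 — 3 statements merged into one kernel-verified Lean document; each statement's English description precedes it below -/
import Mathlib

section
/- Suppose a skewsymmetric n×n real matrix A satisfies the BD equations, and suppose i ∈ Γ₁ and k ≥ 1 are such that τ^k(i) is defined and τ^k(i) = i. Then for every m ∈ {1,…,n} the sum over the cycle vanishes: ∑_{j=0}^{k−1} S_{τ^j(i), m} = 0. -/
/-! Skewsymmetry turns the BD equation at `(i, m)` into
`S i m + S (τ i) m = A (τ i) m - A i m`, so the column `S · m` plus its translate by `τ` is a
coboundary. Summed over a cycle of `τ`, the right-hand side telescopes to zero, while each of the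
two terms on the left contributes the same cycle sum, which is therefore killed by `2`. -/

open Function

section BirkhoffSum

variable {α M : Type*} {f : α → α} {n : ℕ} {x : α}

theorem birkhoffSum_apply_of_isPeriodicPt [AddCommMonoid M] (hx : IsPeriodicPt f n x)
    (g : α → M) : birkhoffSum f g n (f x) = birkhoffSum f g n x := by
  cases n with
  | zero => simp only [birkhoffSum_zero]
  | succ n =>
    rw [birkhoffSum_succ, birkhoffSum_succ', ← iterate_succ_apply, hx.eq, add_comm]

theorem two_nsmul_birkhoffSum_eq_zero_of_add_apply_eq_sub [AddCommGroup M] {s a : α → M}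
    (hx : IsPeriodicPt f n x)
    (hs : ∀ j < n, s (f^[j] x) + s (f (f^[j] x)) = a (f (f^[j] x)) - a (f^[j] x)) :
    2 • birkhoffSum f s n x = 0 :=
  calc
    2 • birkhoffSum f s n x = birkhoffSum f s n x + birkhoffSum f s n (f x) := by
      rw [birkhoffSum_apply_of_isPeriodicPt hx, two_nsmul]
    _ = birkhoffSum f a n (f x) - birkhoffSum f a n x := by
      simp only [birkhoffSum, ← iterate_succ_apply, iterate_succ_apply',
        ← Finset.sum_add_distrib, ← Finset.sum_sub_distrib]
      exact Finset.sum_congr rfl fun j hj => hs j (Finset.mem_range.mp hj)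
    _ = 0 := by rw [birkhoffSum_apply_of_isPeriodicPt hx, sub_self]

end BirkhoffSum

section BDEquations

variable {ι R : Type*} [AddCommGroup R] {S A : Matrix ι ι R} {Γ : Set ι} {τ : ι → ι}

/-- The BD equations for an unknown matrix `A`, with data `S` and a partial map `τ` of indices.
The partial map is encoded as a total function, of which only the values on `Γ` matter. -/
def SatisfiesBD (S A : Matrix ι ι R) (Γ : Set ι) (τ : ι → ι) : Prop :=
  ∀ i ∈ Γ, ∀ m, A i m + A m (τ i) + S i m + S (τ i) m = 0

theorem SatisfiesBD.add_apply_eq_sub (hBD : SatisfiesBD S A Γ τ)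
    (hA : ∀ i j, A i j = -A j i) {i : ι} (hi : i ∈ Γ) (m : ι) :
    S i m + S (τ i) m = A (τ i) m - A i m := by
  have hBD_im := hBD i hi m
  rw [hA m (τ i)] at hBD_im
  rw [← sub_eq_zero, ← hBD_im]
  abel

theorem SatisfiesBD.two_nsmul_sum_cycle_eq_zero (hBD : SatisfiesBD S A Γ τ)
    (hA : ∀ i j, A i j = -A j i) {i : ι} {k : ℕ} (hdef : ∀ j < k, τ^[j] i ∈ Γ)
    (hcycle : IsPeriodicPt τ k i) (m : ι) :
    2 • ∑ j ∈ Finset.range k, S (τ^[j] i) m = 0 :=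
  two_nsmul_birkhoffSum_eq_zero_of_add_apply_eq_sub (s := (S · m)) (a := (A · m))
    hcycle fun j hj => hBD.add_apply_eq_sub hA (hdef j hj) m

theorem stmt_3_general [IsAddTorsionFree R] (hBD : SatisfiesBD S A Γ τ)
    (hA : ∀ i j, A i j = -A j i) {i : ι} {k : ℕ} (hdef : ∀ j < k, τ^[j] i ∈ Γ)
    (hcycle : IsPeriodicPt τ k i) (m : ι) :
    ∑ j ∈ Finset.range k, S (τ^[j] i) m = 0 :=
  (nsmul_eq_zero_iff_right two_ne_zero).mp (hBD.two_nsmul_sum_cycle_eq_zero hA hdef hcycle m)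

end BDEquations

/-- If a skewsymmetric `A` satisfies the BD equations and
`τ^k(i)` is defined with `τ^k(i) = i`, then `∑_{j=0}^{k-1} S_{τ^j(i), m} = 0`
for every `m`. -/
theorem stmt_3 (n : ℕ) (hn : 1 ≤ n)
    (S : Matrix (Fin n) (Fin n) ℝ) (hSsymm : S.IsSymm)
    (Γ₁ Γ₂ : Set (Fin n)) (τ : Fin n → Fin n) (hτ : Set.BijOn τ Γ₁ Γ₂)
    (A : Matrix (Fin n) (Fin n) ℝ) (hAskew : ∀ i j, A i j = - A j i)
    (hBD : ∀ i ∈ Γ₁, ∀ m, A i m + A m (τ i) + S i m + S (τ i) m = 0)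
    (i : Fin n) (hi : i ∈ Γ₁) (k : ℕ) (hk : 1 ≤ k)
    (hdef : ∀ j < k, τ^[j] i ∈ Γ₁) (hcycle : τ^[k] i = i) :
    ∀ m, ∑ j ∈ Finset.range k, S (τ^[j] i) m = 0 :=
  stmt_3_general hBD hAskew hdef hcycle
end

section
/- Suppose a skewsymmetric n×n real matrix A satisfies the BD equations. Then A is invariant under τ on Γ₁: for all i, m ∈ Γ₁ one has A_{τ(i)τ(m)} = A_{im}. -/
/-!
Put `r = A + S`. Since `S` is symmetric, the BD equations say `r m (τ i) = -r i m`. Applying this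
first to `i` and then to `m` cancels the two signs and gives `r (τ i) (τ m) = r i m`. As `A` is the
skew part of `r`, it inherits this invariance.
-/

variable {ι G : Type*} {τ : ι → ι} {s : Set ι}

/-- Skew-symmetry twisted by `τ` in the rows `s`: exchanging the indices of an entry in row `i ∈ s`
and replacing `i` by `τ i` changes its sign. Ordinary skew-symmetry is the case `τ = id`,
`s = Set.univ`; the BD equations are the case `r = A + S`. -/
def IsTwistedSkewOn [Neg G] (τ : ι → ι) (s : Set ι) (r : Matrix ι ι G) : Prop :=
  ∀ i ∈ s, ∀ m, r m (τ i) = -r i m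

theorem IsTwistedSkewOn.apply_map_map [InvolutiveNeg G] {r : Matrix ι ι G}
    (hr : IsTwistedSkewOn τ s r) {i m : ι} (hi : i ∈ s) (hm : m ∈ s) :
    r (τ i) (τ m) = r i m :=
  calc
    r (τ i) (τ m) = -r m (τ i) := hr m hm (τ i)
    _ = - -r i m := congrArg Neg.neg (hr i hi m)
    _ = r i m := neg_neg _

variable [AddCommGroup G] {A S : Matrix ι ι G}

theorem isTwistedSkewOn_add_of_bd (hS : S.IsSymm)
    (hBD : ∀ i ∈ s, ∀ m, A i m + A m (τ i) + S i m + S (τ i) m = 0) :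
    IsTwistedSkewOn τ s (A + S) := by
  intro i hi m
  rw [Matrix.add_apply, Matrix.add_apply, eq_neg_iff_add_eq_zero, ← hS.apply m (τ i), ← hBD i hi m]
  abel

theorem two_nsmul_skew_apply_eq_sub (hA : ∀ i j, A i j = -A j i) (hS : S.IsSymm) (i j : ι) :
    2 • A i j = (A + S) i j - (A + S) j i := by
  rw [Matrix.add_apply, Matrix.add_apply, hA j i, hS.apply i j]
  abel

theorem stmt_5_general (two_regular : IsSMulRegular G (2 : ℕ)) (hS : S.IsSymm)
    (hA : ∀ i j, A i j = -A j i)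
    (hBD : ∀ i ∈ s, ∀ m, A i m + A m (τ i) + S i m + S (τ i) m = 0) :
    ∀ i ∈ s, ∀ m ∈ s, A (τ i) (τ m) = A i m := by
  intro i hi m hm
  have hr : IsTwistedSkewOn τ s (A + S) := isTwistedSkewOn_add_of_bd hS hBD
  apply two_regular
  calc
    2 • A (τ i) (τ m) = (A + S) (τ i) (τ m) - (A + S) (τ m) (τ i) :=
      two_nsmul_skew_apply_eq_sub hA hS _ _
    _ = (A + S) i m - (A + S) m i := by rw [hr.apply_map_map hi hm, hr.apply_map_map hm hi]
    _ = 2 • A i m := (two_nsmul_skew_apply_eq_sub hA hS _ _).symm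

/-- If a skewsymmetric `A` satisfies the BD equations, then `A` is
invariant under `τ` on `Γ₁`. -/
theorem stmt_5 (n : ℕ) (hn : 1 ≤ n)
    (S : Matrix (Fin n) (Fin n) ℝ) (hSsymm : S.IsSymm)
    (Γ₁ Γ₂ : Set (Fin n)) (τ : Fin n → Fin n) (hτ : Set.BijOn τ Γ₁ Γ₂)
    (A : Matrix (Fin n) (Fin n) ℝ) (hAskew : ∀ i j, A i j = - A j i)
    (hBD : ∀ i ∈ Γ₁, ∀ m, A i m + A m (τ i) + S i m + S (τ i) m = 0) :
    ∀ i ∈ Γ₁, ∀ m ∈ Γ₁, A (τ i) (τ m) = A i m :=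
  stmt_5_general (nsmul_right_injective two_ne_zero) hSsymm hAskew hBD
end

section
/- Suppose τ preserves S and τ has no cycles. Define Γ₁⁽⁰⁾ = Γ₁, Γ₂⁽ᵏ⁾ = τ(Γ₁⁽ᵏ⁾), and Γ₁⁽ᵏ⁺¹⁾ = Γ₁⁽ᵏ⁾ ∩ Γ₂⁽ᵏ⁾. Then for every k ≥ 1: (i) for each j ∈ Γ₂⁽ᵏ⁻¹⁾ the iterated preimages τ⁻¹(j), τ⁻²(j), …, τ⁻ᵏ(j) all exist and lie in Γ₁, so the set Γ̃₁⁽ᵏ⁻¹⁾ := τ⁻ᵏ(Γ₂⁽ᵏ⁻¹⁾) is a well-defined subset of Γ₁ on which all k iterates of τ are defined; (ii) τᵏ maps Γ̃₁⁽ᵏ⁻¹⁾ bijectively onto Γ₂⁽ᵏ⁻¹⁾ ⊆ Γ₂; (iii) τᵏ restricted to Γ̃₁⁽ᵏ⁻¹⁾ preserves S; and (iv) τᵏ restricted to Γ̃₁⁽ᵏ⁻¹⁾ has no cycles. In other words, (Γ̃₁⁽ᵏ⁻¹⁾, Γ₂⁽ᵏ⁻¹⁾, τᵏ) is again a Belavin–Drinfeld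 triple. -/
/-!
Let `D` be the set of points on which `τ^{k+1}` is defined as a partial map. By induction on `k`,
`Γ₁⁽ᵏ⁾ = τᵏ(D)`, so `Γ₂⁽ᵏ⁾ = τ^{k+1}(D)` and `Γ̃₁⁽ᵏ⁾ = D`. The claim thus becomes that the partial
map `τ^{k+1} : D → τ^{k+1}(D)` inherits injectivity, preservation of `S` and absence of cycles from
`τ`; for the last, an orbit of `τ^{k+1}` staying `m` steps in `D` is an orbit of `τ` staying
`(k+1)m` steps in `Γ₁`.
-/

/-- The domain of the `k`-th iterate of the partial map `f : s → α`. Partial maps are encoded as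
total functions together with a set on which their values matter. -/
def iterateDomain {α : Type*} (f : α → α) (s : Set α) (k : ℕ) : Set α :=
  {x | ∀ m < k, f^[m] x ∈ s}

/-- The map `f` preserves the two-variable function `S` (the matrix of a Belavin–Drinfeld triple)
on the set `s`. -/
def PreservesOn {α β : Type*} (S : α → α → β) (f : α → α) (s : Set α) : Prop :=
  ∀ i ∈ s, ∀ j ∈ s, S (f i) (f j) = S i j

/-- The partial map `f : s → α` has no cycles: no orbit that is defined for `k ≥ 1` steps returns
to its starting point after `k` steps. -/
def HasNoCycles {α : Type*} (f : α → α) (s : Set α) : Prop :=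
  ∀ i ∈ s, ∀ k, 1 ≤ k → i ∈ iterateDomain f s k → f^[k] i ≠ i

/-- Belavin–Drinfeld triples `(Γ₁, Γ₂, τ)` for the matrix `S`, over an arbitrary index type and
with arbitrary matrix entries. -/
structure IsBelavinDrinfeldTriple {α β : Type*} (S : α → α → β) (Γ₁ Γ₂ : Set α) (τ : α → α) :
    Prop where
  bijOn : Set.BijOn τ Γ₁ Γ₂
  preservesOn : PreservesOn S τ Γ₁
  hasNoCycles : HasNoCycles τ Γ₁

section

variable {α β : Type*} {f : α → α} {s : Set α} {S : α → α → β} {k : ℕ}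

theorem mapsTo_iterate_iterateDomain {m : ℕ} (hm : m < k) :
    Set.MapsTo f^[m] (iterateDomain f s k) s :=
  fun _ hx => hx m hm

theorem iterateDomain_subset (hk : 0 < k) : iterateDomain f s k ⊆ s :=
  mapsTo_iterate_iterateDomain hk

theorem iterateDomain_anti : Antitone (iterateDomain f s) :=
  fun _ _ hkl _ hx m hm => hx m (hm.trans_le hkl)

theorem iterateDomain_succ :
    iterateDomain f s (k + 1) = iterateDomain f s k ∩ f^[k] ⁻¹' s :=
  Set.ext fun _ => Nat.forall_lt_succ_right

theorem mapsTo_iterateDomain_succ :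
    Set.MapsTo f (iterateDomain f s (k + 1)) (iterateDomain f s k) :=
  fun _ hx m hm => hx (m + 1) (Nat.succ_lt_succ hm)

theorem iterateDomain_iterate (m : ℕ) :
    iterateDomain f^[k] (iterateDomain f s k) m = iterateDomain f s (k * m) := by
  ext x
  simp only [iterateDomain, Set.mem_ofPred_eq, ← Function.iterate_mul,
    ← Function.iterate_add_apply]
  constructor
  · intro hx l hl
    have hk : 0 < k := Nat.pos_of_mul_pos_right (Nat.zero_lt_of_lt hl)
    simpa only [Nat.mod_add_div] using
      hx (l / k) (Nat.div_lt_of_lt_mul hl) (l % k) (Nat.mod_lt l hk)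
  · intro hx q hq r hr
    refine hx (r + k * q) ?_
    calc r + k * q < k + k * q := by gcongr
      _ = k * (q + 1) := by ring
      _ ≤ k * m := by gcongr; exact hq

theorem injOn_iterate_iterateDomain (hf : Set.InjOn f s) (k : ℕ) :
    Set.InjOn f^[k] (iterateDomain f s k) := by
  induction k with
  | zero => exact Set.injOn_id _
  | succ k ih =>
    rw [Function.iterate_succ']
    exact hf.comp (ih.mono (iterateDomain_anti k.le_succ))
      (mapsTo_iterate_iterateDomain k.lt_succ_self)

theorem PreservesOn.iterate (hf : PreservesOn S f s) (k : ℕ) :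
    PreservesOn S f^[k] (iterateDomain f s k) := by
  induction k with
  | zero => exact fun _ _ _ _ => rfl
  | succ k ih =>
    rw [iterateDomain_succ]
    rintro i ⟨hi, his⟩ j ⟨hj, hjs⟩
    simp only [Function.iterate_succ_apply']
    exact (hf _ his _ hjs).trans (ih i hi j hj)

theorem HasNoCycles.iterate (hf : HasNoCycles f s) (hk : 0 < k) :
    HasNoCycles f^[k] (iterateDomain f s k) := by
  intro i hi m hm him
  rw [iterateDomain_iterate] at him
  rw [← Function.iterate_mul]
  exact hf i (iterateDomain_subset hk hi) (k * m) (Nat.mul_pos hk hm) him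

theorem IsBelavinDrinfeldTriple.iterate {t : Set α} (h : IsBelavinDrinfeldTriple S s t f)
    (hk : 0 < k) :
    IsBelavinDrinfeldTriple S (iterateDomain f s k) (f^[k] '' iterateDomain f s k) f^[k] where
  bijOn := (injOn_iterate_iterateDomain h.bijOn.injOn k).bijOn_image
  preservesOn := h.preservesOn.iterate k
  hasNoCycles := h.hasNoCycles.iterate hk

theorem eq_image_iterateDomain_of_succ_eq_inter_image {G : ℕ → Set α} (hzero : G 0 = s)
    (hsucc : ∀ k, G (k + 1) = G k ∩ f '' G k) (k : ℕ) :
    G k = f^[k] '' iterateDomain f s (k + 1) := by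
  induction k with
  | zero => simp [hzero, iterateDomain]
  | succ k ih =>
    rw [hsucc, ih]
    apply Set.Subset.antisymm
    · rintro _ ⟨⟨y, hy, hyx⟩, _, ⟨x, hx, rfl⟩, rfl⟩
      have hs : f^[k + 1] x ∈ s := by
        rw [Function.iterate_succ_apply', ← hyx]
        exact mapsTo_iterate_iterateDomain k.lt_succ_self hy
      refine ⟨x, ?_, Function.iterate_succ_apply' f k x⟩
      rw [iterateDomain_succ]
      exact ⟨hx, hs⟩
    · rintro _ ⟨x, hx, rfl⟩
      exact ⟨⟨f x, mapsTo_iterateDomain_succ hx, (Function.iterate_succ_apply f k x).symm⟩,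
        f^[k] x, ⟨x, iterateDomain_anti (Nat.le_succ _) hx, rfl⟩,
        (Function.iterate_succ_apply' f k x).symm⟩

end

theorem stmt_9_general {α β : Type*} {S : α → α → β} {Γ₁ Γ₂ : Set α} {τ : α → α}
    (h : IsBelavinDrinfeldTriple S Γ₁ Γ₂ τ) {G₁ : ℕ → Set α} (hG0 : G₁ 0 = Γ₁)
    (hGsucc : ∀ k, G₁ (k + 1) = G₁ k ∩ (τ '' G₁ k)) (k : ℕ) {Γt : Set α}
    (hΓt : Γt = {i | i ∈ Γ₁ ∧ i ∈ iterateDomain τ Γ₁ (k + 1) ∧ τ^[k + 1] i ∈ τ '' G₁ k}) :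
    (∀ j ∈ τ '' G₁ k, ∃ i ∈ Γ₁, i ∈ iterateDomain τ Γ₁ (k + 1) ∧ τ^[k + 1] i = j) ∧
      τ '' G₁ k ⊆ Γ₂ ∧ IsBelavinDrinfeldTriple S Γt (τ '' G₁ k) τ^[k + 1] := by
  have hG : G₁ k = τ^[k] '' iterateDomain τ Γ₁ (k + 1) :=
    eq_image_iterateDomain_of_succ_eq_inter_image hG0 hGsucc k
  have himage : τ '' G₁ k = τ^[k + 1] '' iterateDomain τ Γ₁ (k + 1) := by
    rw [hG, ← Set.image_comp, ← Function.iterate_succ']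
  have hsub : iterateDomain τ Γ₁ (k + 1) ⊆ Γ₁ := iterateDomain_subset k.succ_pos
  have hdomain : Γt = iterateDomain τ Γ₁ (k + 1) := by
    rw [hΓt, himage]
    exact Set.Subset.antisymm (fun _ hi => hi.2.1)
      fun _ hi => ⟨hsub hi, hi, Set.mem_image_of_mem _ hi⟩
  have hGΓ₁ : G₁ k ⊆ Γ₁ := by
    rw [hG]
    exact (mapsTo_iterate_iterateDomain k.lt_succ_self).image_subset
  refine ⟨?_, (h.bijOn.mapsTo.mono_left hGΓ₁).image_subset, ?_⟩
  · rw [himage]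
    rintro _ ⟨i, hi, rfl⟩
    exact ⟨i, hsub hi, hi, rfl⟩
  · rw [hdomain, himage]
    exact h.iterate k.succ_pos

/-- If `τ` preserves `S` and has no cycles, then for every `k ≥ 1`
(written below as `k + 1` with `k : ℕ`), the triple
`(Γ̃₁⁽ᵏ⁾, Γ₂⁽ᵏ⁾, τ^{k+1})` is again a Belavin–Drinfeld triple, where
`Γ₁⁽⁰⁾ = Γ₁`, `Γ₂⁽ᵏ⁾ = τ(Γ₁⁽ᵏ⁾)`, `Γ₁⁽ᵏ⁺¹⁾ = Γ₁⁽ᵏ⁾ ∩ Γ₂⁽ᵏ⁾`, and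
`Γ̃₁⁽ᵏ⁾ = τ⁻⁽ᵏ⁺¹⁾(Γ₂⁽ᵏ⁾)` (the set of `i ∈ Γ₁` on which all `k + 1` iterates of
`τ` are defined and whose `(k+1)`-st iterate lies in `Γ₂⁽ᵏ⁾`). -/
theorem stmt_9 (n : ℕ) (hn : 1 ≤ n)
    (S : Matrix (Fin n) (Fin n) ℝ) (hSsymm : S.IsSymm)
    (Γ₁ Γ₂ : Set (Fin n)) (τ : Fin n → Fin n) (hτ : Set.BijOn τ Γ₁ Γ₂)
    (hpres : ∀ i ∈ Γ₁, ∀ j ∈ Γ₁, S (τ i) (τ j) = S i j)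
    (hnc : ∀ i ∈ Γ₁, ∀ k : ℕ, 1 ≤ k → (∀ j < k, τ^[j] i ∈ Γ₁) → τ^[k] i ≠ i)
    (G₁ : ℕ → Set (Fin n)) (hG0 : G₁ 0 = Γ₁)
    (hGsucc : ∀ k, G₁ (k + 1) = G₁ k ∩ (τ '' G₁ k)) :
    ∀ k : ℕ, ∀ Γt : Set (Fin n),
      Γt = {i | i ∈ Γ₁ ∧ (∀ m < k + 1, τ^[m] i ∈ Γ₁) ∧ τ^[k + 1] i ∈ τ '' G₁ k} →
      -- (i) all `k+1` iterated preimages of any `j ∈ Γ₂⁽ᵏ⁾` exist and lie in `Γ₁`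
      ((∀ j ∈ τ '' G₁ k,
          ∃ i ∈ Γ₁, (∀ m < k + 1, τ^[m] i ∈ Γ₁) ∧ τ^[k + 1] i = j) ∧
      -- (ii) `τ^{k+1}` maps `Γ̃₁⁽ᵏ⁾` bijectively onto `Γ₂⁽ᵏ⁾ ⊆ Γ₂`
      (Set.BijOn (τ^[k + 1]) Γt (τ '' G₁ k) ∧ τ '' G₁ k ⊆ Γ₂) ∧
      -- (iii) `τ^{k+1}` restricted to `Γ̃₁⁽ᵏ⁾` preserves `S`
      (∀ i ∈ Γt, ∀ j ∈ Γt, S (τ^[k + 1] i) (τ^[k + 1] j) = S i j) ∧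
      -- (iv) `τ^{k+1}` restricted to `Γ̃₁⁽ᵏ⁾` has no cycles
      (∀ i ∈ Γt, ∀ m : ℕ, 1 ≤ m →
          (∀ l < m, (τ^[k + 1])^[l] i ∈ Γt) → (τ^[k + 1])^[m] i ≠ i)) := by
  intro k Γt hΓt
  obtain ⟨hpre, hsub, h⟩ := stmt_9_general ⟨hτ, hpres, hnc⟩ hG0 hGsucc k hΓt
  exact ⟨hpre, ⟨h.bijOn, hsub⟩, h.preservesOn, h.hasNoCycles⟩
end
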